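/- Let d ≥ 1 and T ≥ 1 be integers and let μ, ν be Borel probability measures on the path space ℝ^{dT}. Then ATV(μ, ν) ≤ (2T − 1) · TV(μ, ν); that is, the infimum over bicausal couplings π of ∫_{x ≠ y} 2 dπ(x, y) is at most (2T − 1) times the infimum over all couplings π of ∫_{x ≠ y} 2 dπ(x, y). -/

import Mathlib

open MeasureTheory ProbabilityTheory
open scoped ENNReal

noncomputable section

/-- The path space `ℝ^{dT}`: `T` time steps with state space `ℝ^d`. -/
abbrev Traj (d T : ℕ) : Type := Fin T → Fin d → ℝ

/-- Restriction of a path to its first `t` coordinates. -/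
def restr (d : ℕ) {t T : ℕ} (h : t ≤ T) (x : Traj d T) : Traj d t :=
  fun i => x (Fin.castLE h i)

lemma measurable_restr (d : ℕ) {t T : ℕ} (h : t ≤ T) : Measurable (restr d h) :=
  measurable_pi_lambda _ (fun i => measurable_pi_apply _)

/-- σ-algebra generated by the first `t` coordinates of the first component. -/
def sigmaX (d T : ℕ) {t : ℕ} (h : t ≤ T) : MeasurableSpace (Traj d T × Traj d T) :=
  MeasurableSpace.comap (fun ω => restr d h ω.1) inferInstance

/-- σ-algebra generated by the first `t` coordinates of the second component. -/
def sigmaY (d T : ℕ) {t : ℕ} (h : t ≤ T) : MeasurableSpace (Traj d T × Traj d T) :=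
  MeasurableSpace.comap (fun ω => restr d h ω.2) inferInstance

lemma sigmaX_le (d T : ℕ) {t : ℕ} (h : t ≤ T) :
    sigmaX d T h ≤ (inferInstance : MeasurableSpace (Traj d T × Traj d T)) :=
  ((measurable_restr d h).comp measurable_fst).comap_le

lemma sigmaY_le (d T : ℕ) {t : ℕ} (h : t ≤ T) :
    sigmaY d T h ≤ (inferInstance : MeasurableSpace (Traj d T × Traj d T)) :=
  ((measurable_restr d h).comp measurable_snd).comap_le

/-- A coupling `π` of two laws on the path space is *bicausal* if for each `t < T`,
`σ(Y_1,…,Y_t)` is conditionally independent of `σ(X_1,…,X_T)` given `σ(X_1,…,X_t)`, and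
symmetrically. -/
def IsBicausal (d T : ℕ) (π : Measure (Traj d T × Traj d T)) [IsFiniteMeasure π] : Prop :=
  ∀ t, 1 ≤ t → ∀ h : t + 1 ≤ T,
    CondIndep (sigmaX d T (Nat.le_of_succ_le h)) (sigmaY d T (Nat.le_of_succ_le h))
      (sigmaX d T (le_refl T)) (sigmaX_le d T (Nat.le_of_succ_le h)) π ∧
    CondIndep (sigmaY d T (Nat.le_of_succ_le h)) (sigmaX d T (Nat.le_of_succ_le h))
      (sigmaY d T (le_refl T)) (sigmaY_le d T (Nat.le_of_succ_le h)) π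

/-- The set of couplings of `μ` and `ν`. -/
def Cpl {α : Type*} [MeasurableSpace α] (μ ν : Measure α) : Set (Measure (α × α)) :=
  {π | IsProbabilityMeasure π ∧ π.map Prod.fst = μ ∧ π.map Prod.snd = ν}

/-- The set of bicausal couplings of `μ` and `ν`. -/
def BCpl {d T : ℕ} (μ ν : Measure (Traj d T)) : Set (Measure (Traj d T × Traj d T)) :=
  {π | π ∈ Cpl μ ν ∧ ∃ _ : IsFiniteMeasure π, IsBicausal d T π}

/-- Weighted total variation distance. -/
def TVw {d T : ℕ} (w : Traj d T → ℝ) (μ ν : Measure (Traj d T)) : ℝ≥0∞ :=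
  ⨅ π ∈ Cpl μ ν, ∫⁻ q in {q : Traj d T × Traj d T | q.1 ≠ q.2},
    (ENNReal.ofReal (w q.1) + ENNReal.ofReal (w q.2)) ∂π

/-- Weighted adapted total variation distance. -/
def ATVw {d T : ℕ} (w : Traj d T → ℝ) (μ ν : Measure (Traj d T)) : ℝ≥0∞ :=
  ⨅ π ∈ BCpl μ ν, ∫⁻ q in {q : Traj d T × Traj d T | q.1 ≠ q.2},
    (ENNReal.ofReal (w q.1) + ENNReal.ofReal (w q.2)) ∂π

/-- `p`-th power of the adapted Wasserstein distance (cost `|x-y|_p^p`). -/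
def AWpow (p : ℝ) {d T : ℕ} (μ ν : Measure (Traj d T)) : ℝ≥0∞ :=
  ⨅ π ∈ BCpl μ ν, ∫⁻ q, ENNReal.ofReal (∑ i, ∑ j, |q.1 i j - q.2 i j| ^ p) ∂π

/-- The weight `w_p(x) = 1 + |x|_p^p`. -/
def wp (p : ℝ) {d T : ℕ} (x : Traj d T) : ℝ := 1 + ∑ i, ∑ j, |x i j| ^ p

/-!
A bicausal coupling is built one time step at a time: as long as the two paths agree, the next
values are drawn from a maximal coupling of the two conditional laws, and once the paths have
separated they are drawn independently.

Let `γ` be any coupling of `μ` and `ν`. The first values are coupled as under `γ`. At a later step,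
write `κ` and `η` for the conditional laws of the next value and `μ'` and `ν'` for the laws of the
past. The paths separate with probability at most `∫ (κ_x - η_x)⁺(ℝ^d) dμ'(x)`. If `S` is the set
of `(x, y)` at which the density of `κ_x` exceeds that of `η_x`, this integral equals
`∫ κ_x(S_x) dμ' - ∫ η_x(S_x) dμ'`, which is the sum of `(μ' ⊗ κ)(S) - (ν' ⊗ η)(S)` and
`∫ η_x(S_x) dν' - ∫ η_x(S_x) dμ'`; each of the two is at most `γ(x ≠ y)`. The `T - 1` later steps
therefore cost `2 γ(x ≠ y)` each, and `1 + 2 (T - 1) = 2 T - 1`.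
-/

section Coupling

variable {Ω α β E F : Type*} {mΩ : MeasurableSpace Ω} [MeasurableSpace α] [MeasurableSpace β]
  [MeasurableSpace E] [MeasurableSpace F]

lemma lintegral_comp_le_lintegral_comp_add_measure_ne (P : Measure Ω) {X Y : Ω → α}
    (hY : Measurable Y) {g : α → ℝ≥0∞} (hg : Measurable g) (hg1 : ∀ a, g a ≤ 1) :
    ∫⁻ ω, g (X ω) ∂P ≤ ∫⁻ ω, g (Y ω) ∂P + P {ω | X ω ≠ Y ω} := by
  calc ∫⁻ ω, g (X ω) ∂P
    _ ≤ ∫⁻ ω, (g (Y ω) + {ω | X ω ≠ Y ω}.indicator 1 ω) ∂P := by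
      refine lintegral_mono fun ω => ?_
      by_cases h : X ω = Y ω
      · simp [h]
      · simpa [h] using le_add_left (hg1 _)
    _ = ∫⁻ ω, g (Y ω) ∂P + ∫⁻ ω, {ω | X ω ≠ Y ω}.indicator 1 ω ∂P :=
      lintegral_add_left (hg.comp hY) _
    _ ≤ ∫⁻ ω, g (Y ω) ∂P + P {ω | X ω ≠ Y ω} := by
      gcongr
      exact lintegral_indicator_one_le _

lemma fst_map_prodMap (γ : Measure (α × β)) {f : α → E} {g : β → F} (hf : Measurable f)
    (hg : Measurable g) : (γ.map (Prod.map f g)).fst = γ.fst.map f := by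
  rw [Measure.fst, Measure.fst, Measure.map_map measurable_fst (hf.prodMap hg),
    Measure.map_map hf measurable_fst]
  rfl

lemma snd_map_prodMap (γ : Measure (α × β)) {f : α → E} {g : β → F} (hf : Measurable f)
    (hg : Measurable g) : (γ.map (Prod.map f g)).snd = γ.snd.map g := by
  rw [Measure.snd, Measure.snd, Measure.map_map measurable_snd (hf.prodMap hg),
    Measure.map_map hg measurable_snd]
  rfl

lemma map_prodMap_ne_le [MeasurableEq E] (γ : Measure (α × α)) {f : α → E} (hf : Measurable f) :
    γ.map (Prod.map f f) {q | q.1 ≠ q.2} ≤ γ {p | p.1 ≠ p.2} := by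
  have hne : MeasurableSet {q : E × E | q.1 ≠ q.2} :=
    (measurableSet_eq_fun measurable_fst measurable_snd).compl
  rw [Measure.map_apply (hf.prodMap hf) hne]
  exact measure_mono fun p hp h => hp (congrArg f h)

lemma inv_measure_univ_mul_smul_self (m : Measure α) [IsFiniteMeasure m] :
    ((m Set.univ)⁻¹ * m Set.univ) • m = m := by
  rcases eq_or_ne m 0 with rfl | hm
  · simp
  · rw [ENNReal.inv_mul_cancel (by simpa using hm) (measure_ne_top _ _), one_smul]

end Coupling

lemma prodMkRight_compProd_prodMkLeft {α β γ δ : Type*} [MeasurableSpace α] [MeasurableSpace β]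
    [MeasurableSpace γ] [MeasurableSpace δ] (k : Kernel α β) [IsSFiniteKernel k] (η : Kernel β γ)
    [IsSFiniteKernel η] : k.prodMkRight δ ⊗ₖ η.prodMkLeft (α × δ) =
      (k ⊗ₖ η.prodMkLeft α).prodMkRight δ := by
  ext p s hs
  rw [Kernel.prodMkRight_apply, Kernel.compProd_apply hs, Kernel.compProd_apply hs]
  rfl

section HasCondDistrib

variable {Ω Ω' 𝓧 𝓨 𝓩 : Type*} {mΩ : MeasurableSpace Ω} {mΩ' : MeasurableSpace Ω'}
  [MeasurableSpace 𝓧] [MeasurableSpace 𝓨] [MeasurableSpace 𝓩]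
  {P : Measure Ω} {X : Ω → 𝓧} {Y : Ω → 𝓨} {Z : Ω → 𝓩} {κ : Kernel 𝓧 𝓨}

lemma hasCondDistrib_prodMkRight_id (P : Measure Ω) [SFinite P] (hX : Measurable X)
    (hY : Measurable Y) :
    HasCondDistrib X (fun ω => (X ω, Y ω)) ((Kernel.id : Kernel 𝓧 𝓧).prodMkRight 𝓨) P where
  map_eq := by
    have hid : (Kernel.id : Kernel 𝓧 𝓧).prodMkRight 𝓨 =
      Kernel.deterministic Prod.fst measurable_fst := rfl
    rw [hid, Measure.compProd_deterministic, Measure.map_map (by fun_prop) (by fun_prop)]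
    rfl

lemma hasCondDistrib_snd_fst_compProd (μ : Measure 𝓧) [SFinite μ] (κ : Kernel 𝓧 𝓨)
    [IsMarkovKernel κ] : HasCondDistrib Prod.snd Prod.fst κ (μ ⊗ₘ κ) where
  map_eq := by
    rw [← Measure.fst, Measure.fst_compProd]
    exact Measure.map_id

lemma hasCondDistrib_prodMk {η : Kernel (𝓧 × 𝓨) 𝓩} (hY : HasCondDistrib Y X κ P)
    (hZ : HasCondDistrib Z (fun ω => (X ω, Y ω)) η P) :
    HasCondDistrib (fun ω => (Y ω, Z ω)) X (κ ⊗ₖ η) P where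
  aemeasurable := by fun_prop
  map_eq := by
    rw [← Measure.compProd_assoc', ← hY.map_eq, ← hZ.map_eq,
      AEMeasurable.map_map_of_aemeasurable (by fun_prop) (by fun_prop)]
    rfl

lemma hasCondDistrib_map_iff {g : Ω' → Ω} {P : Measure Ω'} (hg : Measurable g)
    (hX : Measurable X) (hY : Measurable Y) :
    HasCondDistrib Y X κ (P.map g) ↔ HasCondDistrib (Y ∘ g) (X ∘ g) κ P := by
  constructor
  · intro h
    refine ⟨by fun_prop, ?_⟩
    have := h.map_eq
    rw [Measure.map_map (by fun_prop) hg, Measure.map_map hX hg] at this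
    exact this
  · intro h
    refine ⟨by fun_prop, ?_⟩
    rw [Measure.map_map (by fun_prop) hg, Measure.map_map hX hg]
    exact h.map_eq

lemma condIndepFun_of_hasCondDistrib_prodMkRight [StandardBorelSpace Ω] [StandardBorelSpace 𝓨]
    [Nonempty 𝓨] [StandardBorelSpace 𝓩] [Nonempty 𝓩] [IsFiniteMeasure P] {k : Kernel 𝓧 𝓩}
    [IsFiniteKernel k] (hX : Measurable X) (hY : Measurable Y) (hZ : Measurable Z)
    (h : HasCondDistrib Z (fun ω => (X ω, Y ω)) (k.prodMkRight 𝓨) P) :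
    Y ⟂ᵢ[X, hX; P] Z := by
  have hk : HasCondDistrib Z X k P := h.comp_right (hf := measurable_fst)
  have hkX : condDistrib Z X P =ᵐ[(P.map fun ω => (X ω, Y ω)).fst] k := by
    rw [Measure.fst_map_prodMk hY]
    exact condDistrib_ae_eq_of_measure_eq_compProd X hZ.aemeasurable hk.map_eq
  rw [condIndepFun_iff_condDistrib_prod_ae_eq_prodMkRight hZ hY hX]
  filter_upwards [condDistrib_ae_eq_of_measure_eq_compProd _ hZ.aemeasurable h.map_eq,
    ae_of_ae_map measurable_fst.aemeasurable hkX] with p hp hpX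
  rw [hp, Kernel.prodMkRight_apply, Kernel.prodMkRight_apply, hpX]

end HasCondDistrib

section MaximalCoupling

variable {α β : Type*} [MeasurableSpace α] [MeasurableSpace β]
  [MeasurableSpace.CountableOrCountablyGenerated α β]

/-- The common part `κ a ∧ η a` of two kernels: the largest measure below both, with density the
minimum of their densities with respect to `κ + η`. -/
def kernelOverlap (κ η : Kernel α β) [IsFiniteKernel κ] [IsFiniteKernel η] : Kernel α β :=
  (κ + η).withDensity fun a b => min (κ.rnDeriv (κ + η) a b) (η.rnDeriv (κ + η) a b)

/-- The positive part `(κ a - η a)⁺` of the difference of two kernels. Its density with respect to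
`κ + η` is a truncated difference in `ℝ≥0∞`. -/
def kernelExcess (κ η : Kernel α β) [IsFiniteKernel κ] [IsFiniteKernel η] : Kernel α β :=
  (κ + η).withDensity fun a b => κ.rnDeriv (κ + η) a b - η.rnDeriv (κ + η) a b

/-- The positive part of a Hahn decomposition of `κ - η`, jointly measurable in both variables: the
pairs at which the density of `κ` exceeds that of `η`. -/
def kernelExcessSet (κ η : Kernel α β) : Set (α × β) :=
  {p | η.rnDeriv (κ + η) p.1 p.2 < κ.rnDeriv (κ + η) p.1 p.2}

lemma measurableSet_kernelExcessSet (κ η : Kernel α β) : MeasurableSet (kernelExcessSet κ η) :=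
  measurableSet_lt (Kernel.measurable_rnDeriv η (κ + η)) (Kernel.measurable_rnDeriv κ (κ + η))

section Finite

variable (κ η : Kernel α β) [IsFiniteKernel κ] [IsFiniteKernel η]

lemma kernelOverlap_comm : kernelOverlap κ η = kernelOverlap η κ := by
  simp only [kernelOverlap, add_comm η κ, min_comm]

lemma kernelOverlap_add_kernelExcess : kernelOverlap κ η + kernelExcess κ η = κ := by
  set f := κ.rnDeriv (κ + η)
  set g := η.rnDeriv (κ + η)
  have hf : Measurable (Function.uncurry f) := Kernel.measurable_rnDeriv κ (κ + η)
  have hg : Measurable (Function.uncurry g) := Kernel.measurable_rnDeriv η (κ + η)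
  have hsum : (fun a b => min (f a b) (g a b)) + (fun a b => f a b - g a b) = f :=
    funext₂ fun _ _ => (add_comm _ _).trans tsub_add_min
  rw [kernelOverlap, kernelExcess, ← Kernel.withDensity_add_right (hf.min hg) (hf.sub hg), hsum]
  ext1 a
  exact Kernel.withDensity_rnDeriv_eq
    (Measure.absolutelyContinuous_of_le (Measure.le_add_right le_rfl))

lemma kernelOverlap_le : kernelOverlap κ η ≤ κ := fun a => by
  conv_rhs => rw [← kernelOverlap_add_kernelExcess κ η]
  exact Measure.le_add_right le_rfl

lemma kernelExcess_le : kernelExcess κ η ≤ κ := fun a => by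
  conv_rhs => rw [← kernelOverlap_add_kernelExcess κ η]
  exact Measure.le_add_left le_rfl

instance : IsFiniteKernel (kernelOverlap κ η) := isFiniteKernel_of_le (kernelOverlap_le κ η)

instance : IsFiniteKernel (kernelExcess κ η) := isFiniteKernel_of_le (kernelExcess_le κ η)

lemma kernelExcess_apply (a : α) (s : Set β) : kernelExcess κ η a s =
    ∫⁻ b in s, (κ.rnDeriv (κ + η) a b - η.rnDeriv (κ + η) a b) ∂(κ + η) a :=
  Kernel.withDensity_apply' _
    ((Kernel.measurable_rnDeriv κ (κ + η)).sub (Kernel.measurable_rnDeriv η (κ + η))) _ _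

lemma kernelExcess_compl_kernelExcessSet (a : α) :
    kernelExcess κ η a (Prod.mk a ⁻¹' kernelExcessSet κ η)ᶜ = 0 := by
  rw [kernelExcess_apply]
  exact setLIntegral_eq_zero (measurable_prodMk_left (measurableSet_kernelExcessSet κ η)).compl
    fun b hb => tsub_eq_zero_of_le (not_lt.1 hb)

lemma kernelExcess_swap_kernelExcessSet (a : α) :
    kernelExcess η κ a (Prod.mk a ⁻¹' kernelExcessSet κ η) = 0 := by
  rw [kernelExcess_apply, add_comm η κ]
  exact setLIntegral_eq_zero (measurable_prodMk_left (measurableSet_kernelExcessSet κ η))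
    fun b hb => tsub_eq_zero_of_le hb.le

lemma kernelExcess_univ_add_apply_kernelExcessSet (a : α) :
    kernelExcess κ η a Set.univ + η a (Prod.mk a ⁻¹' kernelExcessSet κ η) =
      κ a (Prod.mk a ⁻¹' kernelExcessSet κ η) := by
  set S := Prod.mk a ⁻¹' kernelExcessSet κ η
  have hS : MeasurableSet S := measurable_prodMk_left (measurableSet_kernelExcessSet κ η)
  have hex : kernelExcess κ η a Set.univ = kernelExcess κ η a S := by
    rw [← measure_add_measure_compl hS, kernelExcess_compl_kernelExcessSet, add_zero]
  have hκ : κ a S = kernelOverlap κ η a S + kernelExcess κ η a S :=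
    congr($((kernelOverlap_add_kernelExcess κ η).symm) a S)
  have hη : η a S = kernelOverlap κ η a S := by
    rw [kernelOverlap_comm, ← add_zero (kernelOverlap η κ a S),
      ← kernelExcess_swap_kernelExcessSet κ η a]
    exact congr($((kernelOverlap_add_kernelExcess η κ).symm) a S)
  rw [hex, hκ, hη, add_comm]

/-- The coupling of two Markov kernels that charges the diagonal as much as possible: the common
part is put on the diagonal and the two excesses, of equal mass, are coupled independently. Where
the excesses vanish the normalising factor is `0⁻¹ = ∞`, but it multiplies the zero measure. -/
def maximalCoupling : Kernel α (β × β) :=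
  (kernelOverlap κ η).map (fun b => (b, b)) +
    (kernelExcess κ η ×ₖ kernelExcess η κ).withDensity fun a _ => (kernelExcess κ η a Set.univ)⁻¹

lemma maximalCoupling_apply (a : α) : maximalCoupling κ η a =
    (kernelOverlap κ η a).map (fun b => (b, b)) +
      (kernelExcess κ η a Set.univ)⁻¹ • (kernelExcess κ η a).prod (kernelExcess η κ a) := by
  rw [maximalCoupling, add_apply, Kernel.map_apply _ (by fun_prop),
    Kernel.withDensity_apply, withDensity_const, Kernel.prod_apply]
  exact ((kernelExcess κ η).measurable_coe .univ).inv.comp measurable_fst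

end Finite

variable (κ η : Kernel α β) [IsMarkovKernel κ] [IsMarkovKernel η]

lemma kernelOverlap_univ_add_kernelExcess_univ (a : α) :
    kernelOverlap κ η a Set.univ + kernelExcess κ η a Set.univ = 1 := by
  rw [← measure_univ (μ := κ a)]
  exact congr($(kernelOverlap_add_kernelExcess κ η) a Set.univ)

lemma kernelExcess_univ_comm (a : α) :
    kernelExcess κ η a Set.univ = kernelExcess η κ a Set.univ := by
  have h := kernelOverlap_univ_add_kernelExcess_univ κ η a
  rw [kernelOverlap_comm, ← kernelOverlap_univ_add_kernelExcess_univ η κ a] at h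
  exact (ENNReal.add_right_inj (measure_ne_top _ _)).1 h

lemma fst_maximalCoupling_apply (a : α) : (maximalCoupling κ η a).fst = κ a := by
  have hdiag : ((kernelOverlap κ η a).map fun b => (b, b)).fst = kernelOverlap κ η a :=
    (Measure.fst_map_prodMk measurable_id).trans Measure.map_id
  rw [maximalCoupling_apply, Measure.fst_add, hdiag, Measure.fst, Measure.map_smul,
    Measure.map_fst_prod, smul_smul, kernelExcess_univ_comm η κ, inv_measure_univ_mul_smul_self]
  exact congr($(kernelOverlap_add_kernelExcess κ η) a)

lemma snd_maximalCoupling_apply (a : α) : (maximalCoupling κ η a).snd = η a := by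
  have hdiag : ((kernelOverlap κ η a).map fun b => (b, b)).snd = kernelOverlap κ η a :=
    (Measure.snd_map_prodMk measurable_id).trans Measure.map_id
  rw [maximalCoupling_apply, Measure.snd_add, hdiag, Measure.snd, Measure.map_smul,
    Measure.map_snd_prod, smul_smul, kernelExcess_univ_comm κ η, inv_measure_univ_mul_smul_self,
    kernelOverlap_comm]
  exact congr($(kernelOverlap_add_kernelExcess η κ) a)

instance : IsMarkovKernel (maximalCoupling κ η) where
  isProbabilityMeasure a :=
    ⟨by rw [← Measure.fst_univ, fst_maximalCoupling_apply, measure_univ]⟩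

lemma maximalCoupling_ne_le [MeasurableEq β] (a : α) :
    maximalCoupling κ η a {q | q.1 ≠ q.2} ≤ kernelExcess κ η a Set.univ := by
  have hne : MeasurableSet {q : β × β | q.1 ≠ q.2} :=
    (measurableSet_eq_fun measurable_fst measurable_snd).compl
  rw [maximalCoupling_apply, Measure.add_apply, Measure.map_apply (by fun_prop) hne]
  have hdiag : (fun b : β => (b, b)) ⁻¹' {q | q.1 ≠ q.2} = ∅ := by ext; simp
  calc kernelOverlap κ η a ((fun b => (b, b)) ⁻¹' {q | q.1 ≠ q.2}) +
        ((kernelExcess κ η a Set.univ)⁻¹ • (kernelExcess κ η a).prod (kernelExcess η κ a))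
          {q | q.1 ≠ q.2}
    _ ≤ (kernelExcess κ η a Set.univ)⁻¹ *
        (kernelExcess κ η a).prod (kernelExcess η κ a) Set.univ := by
      rw [hdiag, measure_empty, zero_add, Measure.smul_apply, smul_eq_mul]
      gcongr
      exact Set.subset_univ _
    _ = (kernelExcess κ η a Set.univ)⁻¹ * kernelExcess κ η a Set.univ *
        kernelExcess κ η a Set.univ := by
      rw [← Set.univ_prod_univ, Measure.prod_prod, kernelExcess_univ_comm η κ, mul_assoc]
    _ ≤ kernelExcess κ η a Set.univ := mul_le_of_le_one_left' (ENNReal.inv_mul_le_one _)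

end MaximalCoupling

section AveragedExcess

variable {E F : Type*} [MeasurableSpace E] [MeasurableSpace F]
  [MeasurableSpace.CountableOrCountablyGenerated E F]

lemma lintegral_kernelExcess_le (γ : Measure ((E × F) × (E × F))) [IsFiniteMeasure γ]
    (κ η : Kernel E F) [IsMarkovKernel κ] [IsMarkovKernel η]
    (hκ : γ.fst.fst ⊗ₘ κ = γ.fst) (hη : γ.snd.fst ⊗ₘ η = γ.snd) :
    ∫⁻ x, kernelExcess κ η x Set.univ ∂γ.fst.fst ≤ 2 * γ {p | p.1 ≠ p.2} := by
  set S := kernelExcessSet κ η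
  have hS : MeasurableSet S := measurableSet_kernelExcessSet κ η
  set g : E → ℝ≥0∞ := fun x => η x (Prod.mk x ⁻¹' S)
  have hg : Measurable g := Kernel.measurable_kernel_prodMk_left hS
  have hmass_X : ∫⁻ x, kernelExcess κ η x Set.univ ∂γ.fst.fst + ∫⁻ x, g x ∂γ.fst.fst = γ.fst S := by
    rw [← lintegral_add_left ((kernelExcess κ η).measurable_coe .univ)]
    simp only [g, S, kernelExcess_univ_add_apply_kernelExcessSet]
    rw [← Measure.compProd_apply hS, hκ]
  have hmass_Y : ∫⁻ y, g y ∂γ.snd.fst = γ.snd S := by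
    rw [← Measure.compProd_apply hS, hη]
  have hS_le : γ.fst S ≤ γ.snd S + γ {p | p.1 ≠ p.2} := by
    rw [Measure.fst_apply hS, Measure.snd_apply hS]
    refine (measure_mono fun p hp => ?_).trans (measure_union_le _ _)
    by_cases h : p.1 = p.2
    · exact .inl (h ▸ hp : p.2 ∈ S)
    · exact .inr h
  have hg_le : ∫⁻ y, g y ∂γ.snd.fst ≤ ∫⁻ x, g x ∂γ.fst.fst + γ {p | p.1 ≠ p.2} := by
    rw [Measure.fst, Measure.snd, Measure.map_map measurable_fst measurable_snd, Measure.fst,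
      Measure.fst, Measure.map_map measurable_fst measurable_fst,
      lintegral_map hg (by fun_prop), lintegral_map hg (by fun_prop)]
    refine (lintegral_comp_le_lintegral_comp_add_measure_ne γ (X := Prod.fst ∘ Prod.snd)
      (Y := Prod.fst ∘ Prod.fst) (by fun_prop) hg fun x => prob_le_one).trans ?_
    gcongr with p
    exact fun h => (congrArg Prod.fst h).symm
  have hg_ne_top : ∫⁻ x, g x ∂γ.fst.fst ≠ ∞ := by
    refine ((lintegral_mono fun x => prob_le_one).trans_lt ?_).ne
    simp
  refine (ENNReal.add_le_add_iff_right hg_ne_top).1 ?_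
  calc ∫⁻ x, kernelExcess κ η x Set.univ ∂γ.fst.fst + ∫⁻ x, g x ∂γ.fst.fst
    _ ≤ γ.snd S + γ {p | p.1 ≠ p.2} := hmass_X.trans_le hS_le
    _ ≤ ∫⁻ x, g x ∂γ.fst.fst + γ {p | p.1 ≠ p.2} + γ {p | p.1 ≠ p.2} := by
      rw [← hmass_Y]
      gcongr
    _ = 2 * γ {p | p.1 ≠ p.2} + ∫⁻ x, g x ∂γ.fst.fst := by ring

end AveragedExcess

section Extension

variable {E F : Type*} [MeasurableSpace E] [MeasurableSpace F] [MeasurableEq E]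
  [MeasurableSpace.CountableOrCountablyGenerated E F]

open scoped Classical in
/-- The coupling of `κ x` and `η y` used for the next step of two paths with pasts `x` and `y`:
maximal if `x = y`, independent otherwise. -/
def stickyCoupling (κ η : Kernel E F) [IsFiniteKernel κ] [IsFiniteKernel η] :
    Kernel (E × E) (F × F) :=
  Kernel.piecewise (s := {p | p.1 = p.2}) (measurableSet_eq_fun measurable_fst measurable_snd)
    ((maximalCoupling κ η).prodMkRight E) (κ.prodMkRight E ×ₖ η.prodMkLeft E)

/-- The coupling `π` of two pasts, extended by one step drawn from `stickyCoupling κ η`; the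
coordinates are regrouped so that each past is paired with its own next value. -/
def extendCoupling (π : Measure (E × E)) (κ η : Kernel E F) [IsFiniteKernel κ]
    [IsFiniteKernel η] : Measure ((E × F) × (E × F)) :=
  (π ⊗ₘ stickyCoupling κ η).map fun ω => ((ω.1.1, ω.2.1), (ω.1.2, ω.2.2))

lemma stickyCoupling_apply_of_eq (κ η : Kernel E F) [IsFiniteKernel κ] [IsFiniteKernel η]
    {p : E × E} (h : p.1 = p.2) : stickyCoupling κ η p = maximalCoupling κ η p.1 :=
  if_pos h

lemma stickyCoupling_apply_of_ne (κ η : Kernel E F) [IsFiniteKernel κ] [IsFiniteKernel η]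
    {p : E × E} (h : p.1 ≠ p.2) : stickyCoupling κ η p = (κ p.1).prod (η p.2) :=
  (if_neg h).trans (Kernel.prod_apply ..)

variable (π : Measure (E × E)) (κ η : Kernel E F) [IsMarkovKernel κ] [IsMarkovKernel η]

instance : IsMarkovKernel (stickyCoupling κ η) := by
  unfold stickyCoupling
  infer_instance

lemma fst_stickyCoupling : (stickyCoupling κ η).fst = κ.prodMkRight E := by
  ext1 p
  rw [Kernel.fst_apply, ← Measure.fst, Kernel.prodMkRight_apply]
  by_cases h : p.1 = p.2
  · rw [stickyCoupling_apply_of_eq κ η h, fst_maximalCoupling_apply]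
  · rw [stickyCoupling_apply_of_ne κ η h, Measure.fst_prod]

lemma snd_stickyCoupling : (stickyCoupling κ η).snd = η.prodMkLeft E := by
  ext1 p
  rw [Kernel.snd_apply, ← Measure.snd, Kernel.prodMkLeft_apply]
  by_cases h : p.1 = p.2
  · rw [stickyCoupling_apply_of_eq κ η h, snd_maximalCoupling_apply, h]
  · rw [stickyCoupling_apply_of_ne κ η h, Measure.snd_prod]

instance [IsProbabilityMeasure π] : IsProbabilityMeasure (extendCoupling π κ η) :=
  Measure.isProbabilityMeasure_map (by fun_prop)

variable [SFinite π]

lemma hasCondDistrib_fst_compProd_stickyCoupling :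
    HasCondDistrib (fun ω => ω.2.1) Prod.fst (κ.prodMkRight E) (π ⊗ₘ stickyCoupling κ η) := by
  rw [← fst_stickyCoupling κ η]
  exact (hasCondDistrib_snd_fst_compProd π (stickyCoupling κ η)).fst

lemma hasCondDistrib_snd_compProd_stickyCoupling :
    HasCondDistrib (fun ω => ω.2.2) Prod.fst (η.prodMkLeft E) (π ⊗ₘ stickyCoupling κ η) := by
  rw [← snd_stickyCoupling κ η]
  exact (hasCondDistrib_snd_fst_compProd π (stickyCoupling κ η)).snd

lemma fst_extendCoupling : (extendCoupling π κ η).fst = π.fst ⊗ₘ κ := by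
  have hπ : (π ⊗ₘ stickyCoupling κ η).map Prod.fst = π := Measure.fst_compProd _ _
  have h := ((hasCondDistrib_fst_compProd_stickyCoupling π κ η).comp_right
    (hf := measurable_fst)).map_eq
  rw [← Measure.map_map measurable_fst measurable_fst, hπ] at h
  rw [extendCoupling, Measure.fst, Measure.map_map measurable_fst (by fun_prop)]
  exact h

lemma snd_extendCoupling : (extendCoupling π κ η).snd = π.snd ⊗ₘ η := by
  have hπ : (π ⊗ₘ stickyCoupling κ η).map Prod.fst = π := Measure.fst_compProd _ _
  have h := ((hasCondDistrib_snd_compProd_stickyCoupling π κ η).comp_right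
    (hf := measurable_snd)).map_eq
  rw [← Measure.map_map measurable_snd measurable_fst, hπ] at h
  rw [extendCoupling, Measure.snd, Measure.map_map measurable_snd (by fun_prop)]
  exact h

lemma extendCoupling_ne_le [MeasurableEq F] :
    extendCoupling π κ η {q | q.1 ≠ q.2} ≤
      π {p | p.1 ≠ p.2} + ∫⁻ x, kernelExcess κ η x Set.univ ∂π.fst := by
  have hneE : MeasurableSet {p : E × E | p.1 ≠ p.2} :=
    (measurableSet_eq_fun measurable_fst measurable_snd).compl
  have hne : MeasurableSet {q : (E × F) × (E × F) | q.1 ≠ q.2} := by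
    simp only [ne_eq, Prod.ext_iff]
    exact ((measurableSet_eq_fun (by fun_prop) (by fun_prop)).inter
      (measurableSet_eq_fun (by fun_prop) (by fun_prop))).compl
  have hexc : Measurable fun x => kernelExcess κ η x Set.univ :=
    (kernelExcess κ η).measurable_coe .univ
  have hstep (p : E × E) : stickyCoupling κ η p {q | ((p.1, q.1), (p.2, q.2)) ∈
      {q : (E × F) × (E × F) | q.1 ≠ q.2}} ≤
      {p : E × E | p.1 ≠ p.2}.indicator 1 p + kernelExcess κ η p.1 Set.univ := by
    by_cases h : p.1 = p.2
    · simpa [h, stickyCoupling_apply_of_eq κ η h] using maximalCoupling_ne_le κ η p.2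
    · simp [h]
  rw [extendCoupling, Measure.map_apply (by fun_prop) hne,
    Measure.compProd_apply (hne.preimage (by fun_prop))]
  calc ∫⁻ p, stickyCoupling κ η p {q | ((p.1, q.1), (p.2, q.2)) ∈
        {q : (E × F) × (E × F) | q.1 ≠ q.2}} ∂π
    _ ≤ ∫⁻ p, ({p : E × E | p.1 ≠ p.2}.indicator 1 p + kernelExcess κ η p.1 Set.univ) ∂π :=
      lintegral_mono hstep
    _ = π {p | p.1 ≠ p.2} + ∫⁻ x, kernelExcess κ η x Set.univ ∂π.fst := by
      rw [lintegral_add_right _ (by fun_prop), lintegral_indicator_one hneE, Measure.fst,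
        lintegral_map hexc measurable_fst]

lemma extendCoupling_ne_le_add_two_mul [MeasurableEq F] (γ : Measure ((E × F) × (E × F)))
    [IsFiniteMeasure γ] (hκ : γ.fst.fst ⊗ₘ κ = γ.fst) (hη : γ.snd.fst ⊗ₘ η = γ.snd)
    (hπ : π.fst = γ.fst.fst) :
    extendCoupling π κ η {q | q.1 ≠ q.2} ≤ π {p | p.1 ≠ p.2} + 2 * γ {p | p.1 ≠ p.2} := by
  refine (extendCoupling_ne_le π κ η).trans ?_
  rw [hπ]
  gcongr
  exact lintegral_kernelExcess_le γ κ η hκ hη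

end Extension

section Causal

variable {Ω Ω' : Type*} {mΩ : MeasurableSpace Ω} {mΩ' : MeasurableSpace Ω'} {d T : ℕ}

/-- The coupling of `X` and `Y` under `P` is causal from `X` to `Y`. Causality is expressed by
conditional laws: for each `1 ≤ t ≤ T` the law of `X` given `(X_{1:t}, Y_{1:t})` is a kernel in
`X_{1:t}` alone. -/
def IsCausal (P : Measure Ω) (X Y : Ω → Traj d T) : Prop :=
  ∀ t, 1 ≤ t → ∀ h : t ≤ T, ∃ k : Kernel (Traj d t) (Traj d T), IsMarkovKernel k ∧
    HasCondDistrib X (fun ω => (restr d h (X ω), restr d h (Y ω))) (k.prodMkRight (Traj d t)) P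

lemma isCausal_map_iff {P : Measure Ω'} {g : Ω' → Ω} (hg : Measurable g) {X Y : Ω → Traj d T}
    (hX : Measurable X) (hY : Measurable Y) :
    IsCausal (P.map g) X Y ↔ IsCausal P (X ∘ g) (Y ∘ g) := by
  refine forall₃_congr fun t _ h => exists_congr fun k => and_congr_right fun _ => ?_
  have := measurable_restr d h
  exact hasCondDistrib_map_iff hg (by fun_prop) hX

lemma isCausal_one (P : Measure Ω) [SFinite P] {X Y : Ω → Traj d 1} (hX : Measurable X)
    (hY : Measurable Y) : IsCausal P X Y := fun t ht h => by
  obtain rfl : t = 1 := le_antisymm h ht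
  exact ⟨Kernel.id, inferInstance, hasCondDistrib_prodMkRight_id P hX hY⟩

lemma isBicausal_of_isCausal {π : Measure (Traj d T × Traj d T)} [IsFiniteMeasure π]
    (hXY : IsCausal π Prod.fst Prod.snd) (hYX : IsCausal π Prod.snd Prod.fst) :
    IsBicausal d T π := fun t ht hT => by
  have h := Nat.le_of_succ_le hT
  have hr := measurable_restr d h
  obtain ⟨k, _, hk⟩ := hXY t ht h
  obtain ⟨l, _, hl⟩ := hYX t ht h
  exact ⟨condIndepFun_of_hasCondDistrib_prodMkRight (hr.comp measurable_fst)
      (hr.comp measurable_snd) measurable_fst hk,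
    condIndepFun_of_hasCondDistrib_prodMkRight (hr.comp measurable_snd)
      (hr.comp measurable_fst) measurable_snd hl⟩

/-- Appending a last value to a path of length `T`. -/
def trajSnocEquiv (d T : ℕ) : Traj d T × (Fin d → ℝ) ≃ᵐ Traj d (T + 1) :=
  MeasurableEquiv.prodComm.trans
    (MeasurableEquiv.piFinSuccAbove (fun _ => Fin d → ℝ) (Fin.last T)).symm

lemma trajSnocEquiv_apply (p : Traj d T × (Fin d → ℝ)) :
    trajSnocEquiv d T p = Fin.snoc p.1 p.2 :=
  Fin.insertNth_last' _ _

lemma restr_trajSnocEquiv {t : ℕ} (h : t ≤ T) (p : Traj d T × (Fin d → ℝ)) :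
    restr d (h.trans T.le_succ) (trajSnocEquiv d T p) = restr d h p.1 := by
  ext1 i
  rw [trajSnocEquiv_apply]
  exact Fin.snoc_castSucc (α := fun _ => Fin d → ℝ) p.2 p.1 (Fin.castLE h i)

lemma IsCausal.snoc {P : Measure Ω} [SFinite P] {X Y : Ω → Traj d T} {X' Y' : Ω → Fin d → ℝ}
    {κ : Kernel (Traj d T) (Fin d → ℝ)} [IsMarkovKernel κ] (hX : Measurable X) (hY : Measurable Y)
    (hX' : Measurable X') (hY' : Measurable Y') (h : IsCausal P X Y)
    (hκ : HasCondDistrib X' (fun ω => (X ω, Y ω)) (κ.prodMkRight (Traj d T)) P) :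
    IsCausal P (fun ω => trajSnocEquiv d T (X ω, X' ω))
      (fun ω => trajSnocEquiv d T (Y ω, Y' ω)) := fun t ht htT => by
  rcases Nat.le_succ_iff.1 htT with hle | rfl
  · obtain ⟨k, _, hk⟩ := h t ht hle
    have hr := measurable_restr d hle
    have hX'_past : HasCondDistrib X' (fun ω => ((restr d hle (X ω), restr d hle (Y ω)), X ω))
        (κ.prodMkLeft (Traj d t × Traj d t)) P :=
      hκ.comp_right (Z := fun ω => (X ω, Y ω))
        (f := fun p => ((restr d hle p.1, restr d hle p.2), p.1)) (hf := by fun_prop)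
    have hpair := (hasCondDistrib_prodMk hk hX'_past).comp_left (trajSnocEquiv d T).measurable
    refine ⟨(k ⊗ₖ κ.prodMkLeft (Traj d t)).map (trajSnocEquiv d T),
      Kernel.IsMarkovKernel.map _ (trajSnocEquiv d T).measurable, ?_⟩
    simp only [restr_trajSnocEquiv hle]
    rwa [← Kernel.map_prodMkRight, ← prodMkRight_compProd_prodMkLeft]
  · exact ⟨Kernel.id, inferInstance, hasCondDistrib_prodMkRight_id P
      (by fun_prop) ((measurable_restr d htT).comp (by fun_prop))⟩

end Causal

section CausalCoupling

variable {d T : ℕ}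

section Extension

variable {π : Measure (Traj d T × Traj d T)} [SFinite π]
  (κ η : Kernel (Traj d T) (Fin d → ℝ)) [IsMarkovKernel κ] [IsMarkovKernel η]

lemma isCausal_fst_snd_extendCoupling (h : IsCausal π Prod.fst Prod.snd) :
    IsCausal ((extendCoupling π κ η).map (Prod.map (trajSnocEquiv d T) (trajSnocEquiv d T)))
      Prod.fst Prod.snd := by
  have hπ : IsCausal (π ⊗ₘ stickyCoupling κ η) (Prod.fst ∘ Prod.fst) (Prod.snd ∘ Prod.fst) :=
    (isCausal_map_iff measurable_fst measurable_fst measurable_snd).1 <| by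
      rwa [← Measure.fst, Measure.fst_compProd]
  rw [extendCoupling, Measure.map_map (by fun_prop) (by fun_prop),
    isCausal_map_iff (by fun_prop) measurable_fst measurable_snd]
  exact hπ.snoc (by fun_prop) (by fun_prop) (by fun_prop) (by fun_prop)
    (hasCondDistrib_fst_compProd_stickyCoupling π κ η)

lemma isCausal_snd_fst_extendCoupling (h : IsCausal π Prod.snd Prod.fst) :
    IsCausal ((extendCoupling π κ η).map (Prod.map (trajSnocEquiv d T) (trajSnocEquiv d T)))
      Prod.snd Prod.fst := by
  have hπ : IsCausal (π ⊗ₘ stickyCoupling κ η) (Prod.snd ∘ Prod.fst) (Prod.fst ∘ Prod.fst) :=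
    (isCausal_map_iff measurable_fst measurable_snd measurable_fst).1 <| by
      rwa [← Measure.fst, Measure.fst_compProd]
  have hη : HasCondDistrib (fun ω => ω.2.2) (Prod.swap ∘ Prod.fst) (η.prodMkRight (Traj d T))
      (π ⊗ₘ stickyCoupling κ η) :=
    (hasCondDistrib_snd_compProd_stickyCoupling π κ η).comp_right (hf := measurable_swap)
  rw [extendCoupling, Measure.map_map (by fun_prop) (by fun_prop),
    isCausal_map_iff (by fun_prop) measurable_snd measurable_fst]
  exact hπ.snoc (by fun_prop) (by fun_prop) (by fun_prop) (by fun_prop) hη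

end Extension

lemma exists_isCausal_coupling (γ : Measure (Traj d (T + 1) × Traj d (T + 1)))
    [IsProbabilityMeasure γ] :
    ∃ π : Measure (Traj d (T + 1) × Traj d (T + 1)), IsProbabilityMeasure π ∧
      π.fst = γ.fst ∧ π.snd = γ.snd ∧ IsCausal π Prod.fst Prod.snd ∧
      IsCausal π Prod.snd Prod.fst ∧
      π {p | p.1 ≠ p.2} ≤ ((2 * T + 1 : ℕ) : ℝ≥0∞) * γ {p | p.1 ≠ p.2} := by
  induction T with
  | zero =>
    exact ⟨γ, inferInstance, rfl, rfl, isCausal_one γ measurable_fst measurable_snd,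
      isCausal_one γ measurable_snd measurable_fst, by simp⟩
  | succ T ih =>
    set e := trajSnocEquiv d (T + 1)
    set γ' := γ.map (Prod.map e.symm e.symm)
    set κ := γ'.fst.condKernel
    set η := γ'.snd.condKernel
    have : IsProbabilityMeasure γ' := Measure.isProbabilityMeasure_map (by fun_prop)
    have : IsProbabilityMeasure (γ'.map (Prod.map Prod.fst Prod.fst)) :=
      Measure.isProbabilityMeasure_map (by fun_prop)
    obtain ⟨π, _, hfst, hsnd, hXY, hYX, hne⟩ := ih (γ'.map (Prod.map Prod.fst Prod.fst))
    rw [fst_map_prodMap _ measurable_fst measurable_fst, ← Measure.fst] at hfst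
    rw [snd_map_prodMap _ measurable_fst measurable_fst, ← Measure.fst] at hsnd
    have hκ : γ'.fst.fst ⊗ₘ κ = γ'.fst := Measure.disintegrate _ _
    have hη : γ'.snd.fst ⊗ₘ η = γ'.snd := Measure.disintegrate _ _
    refine ⟨(extendCoupling π κ η).map (Prod.map e e),
      Measure.isProbabilityMeasure_map (by fun_prop), ?_, ?_,
      isCausal_fst_snd_extendCoupling κ η hXY, isCausal_snd_fst_extendCoupling κ η hYX, ?_⟩
    · rw [fst_map_prodMap _ e.measurable e.measurable, fst_extendCoupling, hfst, hκ,
        fst_map_prodMap _ e.symm.measurable e.symm.measurable, e.map_map_symm]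
    · rw [snd_map_prodMap _ e.measurable e.measurable, snd_extendCoupling, hsnd, hη,
        snd_map_prodMap _ e.symm.measurable e.symm.measurable, e.map_map_symm]
    · calc (extendCoupling π κ η).map (Prod.map e e) {p | p.1 ≠ p.2}
        _ ≤ extendCoupling π κ η {q | q.1 ≠ q.2} := map_prodMap_ne_le _ e.measurable
        _ ≤ π {p | p.1 ≠ p.2} + 2 * γ' {p | p.1 ≠ p.2} :=
          extendCoupling_ne_le_add_two_mul π κ η γ' hκ hη hfst
        _ ≤ ((2 * T + 1 : ℕ) : ℝ≥0∞) * γ' {p | p.1 ≠ p.2} + 2 * γ' {p | p.1 ≠ p.2} := by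
          gcongr
          refine hne.trans ?_
          gcongr
          exact map_prodMap_ne_le γ' measurable_fst
        _ = ((2 * (T + 1) + 1 : ℕ) : ℝ≥0∞) * γ' {p | p.1 ≠ p.2} := by
          push_cast
          ring
        _ ≤ ((2 * (T + 1) + 1 : ℕ) : ℝ≥0∞) * γ {p | p.1 ≠ p.2} := by
          gcongr
          exact map_prodMap_ne_le γ e.symm.measurable

end CausalCoupling

/-- For Borel probability measures `μ, ν` on the path space `ℝ^{dT}`,
the adapted total variation is at most `(2T - 1)` times the total variation. -/
theorem adapted_tv_le_tv (d T : ℕ) (hd : 1 ≤ d) (hT : 1 ≤ T)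
    (μ ν : Measure (Traj d T)) [IsProbabilityMeasure μ] [IsProbabilityMeasure ν] :
    ATVw (fun _ => 1) μ ν ≤ ((2 * T - 1 : ℕ) : ℝ≥0∞) * TVw (fun _ => 1) μ ν := by
  obtain ⟨T, rfl⟩ := Nat.exists_eq_add_of_le' hT
  have hc : ((2 * (T + 1) - 1 : ℕ) : ℝ≥0∞) ≠ 0 := Nat.cast_ne_zero.2 (by lia)
  simp only [ATVw, TVw, lintegral_const, Measure.restrict_apply_univ,
    ENNReal.mul_iInf_of_ne hc (ENNReal.natCast_ne_top _)]
  refine le_iInf₂ fun γ ⟨_, hγμ, hγν⟩ => ?_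
  obtain ⟨π, _, hfst, hsnd, hXY, hYX, hne⟩ := exists_isCausal_coupling γ
  refine iInf₂_le_of_le π ⟨⟨‹_›, hfst.trans hγμ, hsnd.trans hγν⟩, inferInstance,
    isBicausal_of_isCausal hXY hYX⟩ ?_
  rw [mul_left_comm]
  gcongr
  exact hne

end
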